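/- Let L be an even lattice, l ∈ L a primitive isotropic vector, and m ∈ L_ℚ with (m,l) = 0, such that −E_{m,l} ∈ Õ(L) and −id ∉ Õ(L) (i.e. ℤl is an irregular 0-dimensional cusp for Õ(L)). Then: (i) (l, L) = 2ℤ, i.e. div(l) = 2; (ii) for every v ∈ L_ℚ with (v,l) = 0 and (v,u) ∈ ℤ for all u ∈ l^⊥ ∩ L, one has 2v ∈ (l^⊥ ∩ L) + ℚl (i.e. the discriminant group of the quotient lattice (l^⊥ ∩ L)/ℤl is 2-elementary); (iii) (m,v) ∈ ℤ for every v ∈ l^⊥ ∩ L (i.e. m defines an element of the dual of (l^⊥ ∩ L)/ℤl). -/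

import Mathlib

/-!
Everything below comes from evaluating `-E_{m,l} - id` on dual vectors, together with the fact that a
rational multiple of the primitive vector `l` lying in `L` is an integral multiple.

Let `(l, L) = dℤ`. Since `l / d` is a dual vector fixed by `E_{m,l}`, we get `-2l / d ∈ L`, hence
`d ∣ 2`. If `d = 1`, pick `w ∈ L` with `(l, w) = 1`; then `E_{m,l} w ∈ L` shows `m + cl ∈ L` for
some `c`, so `E_{m,l} = E_{m + cl,l}` acts trivially on `L^∨ / L` because `L` is even, and
therefore so does `-id`, which is excluded. So `d = 2`.

For `v` in the dual of `(l^⊥ ∩ L) / ℤl`, a suitable translate `v + cl` is orthogonal to a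
`w ∈ L` with `(l, w) = 2`; as `L = ℤw + (l^⊥ ∩ L)`, this translate lies in `L^∨`, and
`-E_{m,l} - id` maps it into `-2v + ℚl`. Finally `E_{m,l} u = u - (m, u) l` for `u ∈ l^⊥ ∩ L`
gives the integrality of `(m, u)`.
-/

noncomputable section

open LinearMap (BilinForm)

variable {V : Type*} [AddCommGroup V] [Module ℚ V]

/-- The Eichler transvection `E_{m,l}` as a linear endomorphism of `V`:
`E_{m,l}(v) = v - (m,v)•l + (l,v)•m - (1/2)(m,m)(l,v)•l`. -/
def eichler (B : BilinForm ℚ V) (m l : V) : V →ₗ[ℚ] V where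
  toFun u := u - B m u • l + B l u • m - ((1 / 2 : ℚ) * B m m * B l u) • l
  map_add' x y := by
    simp only [map_add, LinearMap.add_apply]
    module
  map_smul' a x := by
    simp only [map_smul, LinearMap.smul_apply, smul_eq_mul, RingHom.id_apply]
    module

/-- `l` is a primitive vector of the lattice `L`. -/
def IsPrimitiveIn (L : Submodule ℤ V) (l : V) : Prop :=
  l ∈ L ∧ ∀ (k : ℤ) (u : V), u ∈ L → l = k • u → k = 1 ∨ k = -1

/-- `I = ℤl` is an irregular 0-dimensional cusp for the group of isometries `S`:
`-id ∉ S` and `-E_{m,l} ∈ S` for some `m ⊥ l`. -/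
def IsIrregular (B : BilinForm ℚ V) (S : Set (V ≃ₗ[ℚ] V)) (l : V) : Prop :=
  LinearEquiv.neg ℚ ∉ S ∧
    ∃ m : V, B m l = 0 ∧ ∃ γ ∈ S, (γ : V →ₗ[ℚ] V) = -(eichler B m l)

/-- Membership in the stable orthogonal group (discriminant kernel) `Õ(L)`:
`γ` is an isometry of `B`, preserves `L` (in both directions), and acts trivially
on `L^∨/L`. -/
def MemStableOrth (B : BilinForm ℚ V) (L : Submodule ℤ V) (γ : V ≃ₗ[ℚ] V) : Prop :=
  (∀ v w : V, B (γ v) (γ w) = B v w) ∧ (∀ x ∈ L, γ x ∈ L) ∧ (∀ x ∈ L, γ⁻¹ x ∈ L) ∧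
    ∀ v : V, (∀ x ∈ L, ∃ n : ℤ, B v x = (n : ℚ)) → γ v - v ∈ L

/-- A rational multiple of a primitive vector that lies in the lattice is an integral multiple. -/
lemma IsPrimitiveIn.exists_int_of_smul_mem {L : Submodule ℤ V} {l : V} (h : IsPrimitiveIn L l)
    {q : ℚ} (hq : q • l ∈ L) : ∃ n : ℤ, q = n := by
  have hd : (q.den : ℚ) ≠ 0 := by exact_mod_cast q.den_ne_zero
  -- Bézout for numerator and denominator puts `l / q.den` in `L`.
  obtain ⟨a, b, hab⟩ : IsCoprime q.num (q.den : ℤ) := by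
    rw [Int.isCoprime_iff_nat_coprime]
    simpa using q.reduced
  have hab' : (a : ℚ) * q.num + b * q.den = 1 := by exact_mod_cast hab
  have hmem : a • (q • l) + b • l ∈ L :=
    L.add_mem (L.smul_mem a hq) (L.smul_mem b h.1)
  have hqd : q * q.den = q.num := Rat.mul_den_eq_num q
  have hl : l = (q.den : ℤ) • (a • (q • l) + b • l) := by
    rw [← Int.cast_smul_eq_zsmul ℚ, ← Int.cast_smul_eq_zsmul ℚ a, ← Int.cast_smul_eq_zsmul ℚ b,
      smul_smul, ← add_smul, smul_smul]
    have : (((q.den : ℤ) : ℚ) * (a * q + b)) = 1 := by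
      push_cast
      linear_combination hab' + (a : ℚ) * hqd
    rw [this, one_smul]
  have hden : q.den = 1 := by
    rcases h.2 _ _ hmem hl with h1 | h1 <;> omega
  exact ⟨q.num, by rw [← hqd, hden]; simp⟩

lemma IsPrimitiveIn.ne_zero {L : Submodule ℤ V} {l : V} (h : IsPrimitiveIn L l) : l ≠ 0 := by
  rintro rfl
  have := h.2 0 0 L.zero_mem (by simp)
  omega

/-- The values of an integral functional on a lattice form a cyclic subgroup `aℤ`. -/
lemma exists_generator_values (f : V →ₗ[ℚ] ℚ) (L : Submodule ℤ V)
    (hint : ∀ x ∈ L, ∃ n : ℤ, f x = n) :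
    ∃ a : ℤ, (∃ x ∈ L, f x = a) ∧ ∀ x ∈ L, ∃ n : ℤ, f x = a * n := by
  let H : AddSubgroup ℤ :=
    { carrier := {n | ∃ x ∈ L, f x = n}
      zero_mem' := ⟨0, L.zero_mem, by simp⟩
      add_mem' := by
        rintro a b ⟨x, hx, hx'⟩ ⟨y, hy, hy'⟩
        exact ⟨x + y, L.add_mem hx hy, by simp [hx', hy']⟩
      neg_mem' := by
        rintro a ⟨x, hx, hx'⟩
        exact ⟨-x, L.neg_mem hx, by simp [hx']⟩ }
  obtain ⟨a, ha⟩ := Int.subgroup_cyclic H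
  refine ⟨a, ?_, fun x hx => ?_⟩
  · have : a ∈ H := ha ▸ AddSubgroup.subset_closure rfl
    exact this
  · obtain ⟨n, hn⟩ := hint x hx
    have : n ∈ H := ⟨x, hx, hn⟩
    rw [ha, AddSubgroup.mem_closure_singleton] at this
    obtain ⟨k, rfl⟩ := this
    exact ⟨k, by rw [hn]; push_cast [smul_eq_mul]; ring⟩

/-- If `m` is congruent modulo `ℚl` to a vector of the even lattice `L`, then `E_{m,l}` acts
trivially on `L^∨ / L`. -/
lemma eichler_sub_mem {B : BilinForm ℚ V} (hsymm : ∀ x y : V, B x y = B y x)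
    {L : Submodule ℤ V} (heven : ∀ x ∈ L, ∃ n : ℤ, B x x = 2 * (n : ℚ))
    {l : V} (hl : l ∈ L) (hliso : B l l = 0) {m : V} (hml : B m l = 0)
    {c : ℚ} (hm : m + c • l ∈ L) {v : V} (hv : ∀ x ∈ L, ∃ n : ℤ, B v x = (n : ℚ)) :
    eichler B m l v - v ∈ L := by
  obtain ⟨a, ha⟩ := hv _ hm
  obtain ⟨b, hb⟩ := hv _ hl
  obtain ⟨k, hk⟩ := heven _ hm
  simp only [map_add, map_smul, LinearMap.add_apply, LinearMap.smul_apply, smul_eq_mul, hliso,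
    hml, hsymm l m] at hk ha
  rw [hsymm v l] at hb
  rw [hsymm v m, hsymm v l, hb] at ha
  have key : eichler B m l v - v = b • (m + c • l) - (a + k * b) • l := by
    rw [← Int.cast_smul_eq_zsmul ℚ, ← Int.cast_smul_eq_zsmul ℚ]
    have h1 : B m v = a - c * b := by
      linear_combination ha
    have h2 : B m m = 2 * k := by linear_combination hk
    simp only [eichler, LinearMap.coe_mk, AddHom.coe_mk, h1, h2, hb]
    push_cast
    module
  rw [key]
  exact L.sub_mem (L.smul_mem _ hm) (L.smul_mem _ hl)

/-- constraints at an irregular cusp of the stable orthogonal group: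
if `-E_{m,l} ∈ Õ(L)` and `-id ∉ Õ(L)`, then (i) `div(l) = 2`, (ii) the discriminant
group of `(l^⊥ ∩ L)/ℤl` is 2-elementary, and (iii) `m` pairs integrally with `l^⊥ ∩ L`. -/
theorem statement8 (B : BilinForm ℚ V) [FiniteDimensional ℚ V]
    (hsymm : ∀ x y : V, B x y = B y x)
    (hnd : LinearMap.BilinForm.Nondegenerate B)
    (L : Submodule ℤ V) (hfg : L.FG)
    (hspan : Submodule.span ℚ (L : Set V) = ⊤)
    (hint : ∀ x ∈ L, ∀ y ∈ L, ∃ n : ℤ, B x y = (n : ℚ))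
    (heven : ∀ x ∈ L, ∃ n : ℤ, B x x = 2 * (n : ℚ))
    (l : V) (hprim : IsPrimitiveIn L l) (hliso : B l l = 0)
    (m : V) (hml : B m l = 0)
    (hE : ∃ γ : V ≃ₗ[ℚ] V, MemStableOrth B L γ ∧ (γ : V →ₗ[ℚ] V) = -(eichler B m l))
    (hneg : ¬ MemStableOrth B L (LinearEquiv.neg ℚ)) :
    -- (i) `div(l) = 2`:
    ((∀ x ∈ L, ∃ n : ℤ, B l x = 2 * (n : ℚ)) ∧ (∃ x ∈ L, B l x = 2)) ∧
    -- (ii) the discriminant group of `(l^⊥ ∩ L)/ℤl` is 2-elementary: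
    (∀ v : V, B v l = 0 → (∀ u ∈ L, B u l = 0 → ∃ n : ℤ, B v u = (n : ℚ)) →
      ∃ x ∈ L, B x l = 0 ∧ ∃ c : ℚ, (2 : ℚ) • v = x + c • l) ∧
    -- (iii) `m` defines an element of the dual of `(l^⊥ ∩ L)/ℤl`:
    (∀ u ∈ L, B u l = 0 → ∃ n : ℤ, B m u = (n : ℚ)) := by
  obtain ⟨γ, ⟨-, hγL, -, hγd⟩, hγ⟩ := hE
  have hlL := hprim.1
  have hγ' : ∀ x, γ x = -(eichler B m l x) := fun x => LinearMap.congr_fun hγ x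
  have hEL : ∀ x ∈ L, eichler B m l x ∈ L := fun x hx => by
    simpa [hγ'] using L.neg_mem (hγL x hx)
  have hEperp : ∀ u, B u l = 0 → eichler B m l u = u - B m u • l := fun u hu => by
    simp [eichler, hsymm l u, hu]
  have hiii : ∀ u ∈ L, B u l = 0 → ∃ n : ℤ, B m u = (n : ℚ) := fun u hu hul => by
    apply hprim.exists_int_of_smul_mem
    have := L.sub_mem hu (hEL u hu)
    rwa [hEperp u hul, sub_sub_cancel] at this
  obtain ⟨a, ⟨w, hwL, hw⟩, ha⟩ := exists_generator_values (B l) L (fun x hx => hint l hlL x hx)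
  have ha0 : (a : ℚ) ≠ 0 := by
    intro h0
    have hBl : B l = 0 := by
      apply LinearMap.ext_on hspan
      intro x hx
      obtain ⟨n, hn⟩ := ha x hx
      simp [hn, h0]
    exact hprim.ne_zero (hnd.1 l (fun y => by simp [hBl]))
  have ha2 : a ∣ 2 := by
    -- `l / a` is a dual vector fixed by `E_{m,l}`.
    have h1 := hγd ((a : ℚ)⁻¹ • l) (fun x hx => by
      obtain ⟨n, hn⟩ := ha x hx
      exact ⟨n, by simp [hn, ha0]⟩)
    rw [hγ', hEperp _ (by simp [hliso])] at h1
    have h2 : (-2 * (a : ℚ)⁻¹) • l ∈ L := by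
      convert h1 using 1
      simp only [map_smul, hml]
      module
    obtain ⟨n, hn⟩ := hprim.exists_int_of_smul_mem h2
    refine ⟨-n, ?_⟩
    have : (2 : ℚ) = a * (-n) := by
      rw [← hn]
      field_simp
    exact_mod_cast this
  have hane1 : ¬ IsUnit a := by
    intro hu
    obtain ⟨w₁, hw₁L, hw₁⟩ : ∃ x ∈ L, B l x = 1 := by
      rcases Int.isUnit_iff.1 hu with rfl | rfl
      · exact ⟨w, hwL, by simpa using hw⟩
      · exact ⟨-w, L.neg_mem hwL, by simp [hw]⟩
    have hmem : m + (-B m w₁ - 1 / 2 * B m m) • l ∈ L := by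
      convert L.sub_mem (hEL w₁ hw₁L) hw₁L using 1
      simp only [eichler, LinearMap.coe_mk, AddHom.coe_mk, hw₁]
      module
    refine hneg ⟨fun v w => by simp, fun x hx => by simpa using hx,
      fun x hx => ?_, fun v hv => ?_⟩
    · have : (LinearEquiv.neg ℚ : V ≃ₗ[ℚ] V)⁻¹ x = -x := by
        apply (LinearEquiv.neg ℚ : V ≃ₗ[ℚ] V).injective
        rw [← LinearEquiv.mul_apply, mul_inv_cancel]
        simp
      rw [this]
      exact L.neg_mem hx
    · have := L.add_mem (hγd v hv) (eichler_sub_mem hsymm heven hlL hliso hml hmem hv)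
      convert this using 1
      simp only [hγ', LinearEquiv.neg_apply]
      abel
  have ha22 : a = 2 ∨ a = -2 := by
    have h1 : a ≤ 2 := Int.le_of_dvd (by norm_num) ha2
    have h2 : -a ≤ 2 := Int.le_of_dvd (by norm_num) ((neg_dvd).2 ha2)
    rw [Int.isUnit_iff] at hane1
    have h3 : a ≠ 0 := by exact_mod_cast ha0
    omega
  have hev : ∀ x ∈ L, ∃ n : ℤ, B l x = 2 * (n : ℚ) := fun x hx => by
    obtain ⟨n, hn⟩ := ha x hx
    rcases ha22 with rfl | rfl
    · exact ⟨n, by simpa using hn⟩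
    · exact ⟨-n, by rw [hn]; push_cast; ring⟩
  obtain ⟨w₂, hw₂L, hw₂⟩ : ∃ x ∈ L, B l x = 2 := by
    rcases ha22 with rfl | rfl
    · exact ⟨w, hwL, by simpa using hw⟩
    · exact ⟨-w, L.neg_mem hwL, by simp [hw]⟩
  refine ⟨⟨hev, w₂, hw₂L, hw₂⟩, fun v hvl hv => ?_, hiii⟩
  -- The translate of `v` along `l` that is orthogonal to `w₂`.
  set v' : V := v - (B v w₂ / 2) • l with hv'
  have hv'l : B v' l = 0 := by simp [hv', hvl, hliso]
  have hdual : ∀ x ∈ L, ∃ n : ℤ, B v' x = (n : ℚ) := fun x hx => by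
    obtain ⟨k, hk⟩ := hev x hx
    have hyl : B (x - k • w₂) l = 0 := by
      rw [hsymm, ← Int.cast_smul_eq_zsmul ℚ, map_sub, map_smul, hk, hw₂, smul_eq_mul]
      ring
    obtain ⟨n, hn⟩ := hv (x - k • w₂) (L.sub_mem hx (L.smul_mem k hw₂L)) hyl
    refine ⟨n, ?_⟩
    rw [← hn, ← Int.cast_smul_eq_zsmul ℚ]
    simp only [hv', map_sub, map_smul, LinearMap.sub_apply, LinearMap.smul_apply, smul_eq_mul, hk]
    ring
  have hmem := L.neg_mem (hγd v' hdual)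
  rw [hγ', hEperp v' hv'l] at hmem
  refine ⟨_, hmem, ?_, B v w₂ + B m v', ?_⟩
  · simp [hv'l, hliso]
  · generalize B m v' = t
    rw [hv']
    module
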